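/- Let f be an S-parking function of the finite sets A_1,…,A_k, let e ∈ A_1 ∩ ⋁_{1 ≤ j ≤ k} A_j, and suppose f(1) > 0. Then the function f' defined by f'(1) = f(1) − 1 and f'(i) = f(i) for i = 2,…,k is an S-parking function of the sets A_1 \ {e}, A_2, …, A_k. -/

import Mathlib

/-- `⋁_{i ∈ I} A i`: the (finite) set of elements belonging to exactly one of the
sets `A i` with `i ∈ I`. -/
def onlyOne {α : Type*} [DecidableEq α] {k : ℕ} (A : Fin k → Finset α)
    (I : Finset (Fin k)) : Finset α :=
  (I.biUnion A).filter fun e => (I.filter fun i => e ∈ A i).card = 1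

/-- `f` is an S-parking function of the sets `A 0, …, A (k-1)`. -/
def IsSParkingFun {α : Type*} [DecidableEq α] {k : ℕ} (A : Fin k → Finset α)
    (f : Fin k → ℕ) : Prop :=
  ∀ I : Finset (Fin k), I.Nonempty → ∃ i ∈ I, f i < (A i ∩ onlyOne A I).card

section

variable {α : Type*} [DecidableEq α] {k : ℕ} {A B : Fin k → Finset α} {f g : Fin k → ℕ}
  {I : Finset (Fin k)} {i : Fin k} {e : α}

theorem mem_onlyOne : e ∈ onlyOne A I ↔ ∃! i, i ∈ I ∧ e ∈ A i := by
  have card_iff : (I.filter fun i => e ∈ A i).card = 1 ↔ ∃! i, i ∈ I ∧ e ∈ A i := by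
    simp only [Finset.card_eq_one, Finset.singleton_iff_unique_mem, Finset.mem_filter]
  simp only [onlyOne, Finset.mem_filter, Finset.mem_biUnion, card_iff]
  exact and_iff_right_of_imp ExistsUnique.exists

-- Shrinking the sets only lowers multiplicities, so an element of `B i` that lay in exactly one
-- of the sets before still lies in exactly one.
theorem inter_onlyOne_subset_onlyOne (hBA : B ≤ A) (hi : i ∈ I) :
    B i ∩ onlyOne A I ⊆ onlyOne B I := by
  intro x hx
  obtain ⟨hxB, hxA⟩ := Finset.mem_inter.mp hx
  exact mem_onlyOne.mpr ⟨i, ⟨hi, hxB⟩, fun j ⟨hj, hxj⟩ =>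
    (mem_onlyOne.mp hxA).unique ⟨hj, hBA j hxj⟩ ⟨hi, hBA i hxB⟩⟩

theorem card_inter_onlyOne_le (hBA : B ≤ A) (hi : i ∈ I) :
    (A i ∩ onlyOne A I).card ≤ (B i ∩ onlyOne B I).card + (A i \ B i).card := by
  have hcover : A i ∩ onlyOne A I ⊆ (B i ∩ onlyOne B I) ∪ (A i \ B i) := by
    intro x hx
    obtain ⟨hxA, hxI⟩ := Finset.mem_inter.mp hx
    by_cases hxB : x ∈ B i
    · have hxI' := inter_onlyOne_subset_onlyOne hBA hi (Finset.mem_inter_of_mem hxB hxI)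
      exact Finset.mem_union_left _ (Finset.mem_inter_of_mem hxB hxI')
    · exact Finset.mem_union_right _ (Finset.mem_sdiff.mpr ⟨hxA, hxB⟩)
  exact (Finset.card_le_card hcover).trans (Finset.card_union_le _ _)

theorem IsSParkingFun.of_le (hf : IsSParkingFun A f) (hBA : B ≤ A)
    (hg : ∀ i, g i + (A i \ B i).card ≤ f i) : IsSParkingFun B g := by
  intro I hI
  obtain ⟨i, hi, hlt⟩ := hf I hI
  refine ⟨i, hi, Nat.lt_of_add_lt_add_right (n := (A i \ B i).card) ?_⟩
  calc
    g i + (A i \ B i).card ≤ f i := hg i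
    _ < (A i ∩ onlyOne A I).card := hlt
    _ ≤ (B i ∩ onlyOne B I).card + (A i \ B i).card := card_inter_onlyOne_le hBA hi

theorem sparking_fun_delete_elem_general (hf : IsSParkingFun A f) (i : Fin k) (D : Finset α)
    (hD : D.card ≤ f i) :
    IsSParkingFun (Function.update A i (A i \ D)) (Function.update f i (f i - D.card)) := by
  refine hf.of_le (update_le_self_iff.mpr Finset.sdiff_subset) fun j => ?_
  obtain rfl | hj := eq_or_ne j i
  · have hremoved : (A j \ (A j \ D)).card ≤ D.card := Finset.card_le_card sdiff_sdiff_le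
    simp only [Function.update_self]
    omega
  · simp only [Function.update_of_ne hj, Finset.sdiff_self, Finset.card_empty, add_zero, le_refl]

end

theorem sparking_fun_delete_elem {α : Type*} [DecidableEq α] {k : ℕ}
    (A : Fin (k + 1) → Finset α) (f : Fin (k + 1) → ℕ)
    (hf : IsSParkingFun A f) (e : α)
    (he : e ∈ A 0 ∩ onlyOne A Finset.univ) (hf0 : 0 < f 0) :
    IsSParkingFun (Function.update A 0 (A 0 \ {e}))
      (Function.update f 0 (f 0 - 1)) :=
  sparking_fun_delete_elem_general hf 0 {e} hf0
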